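/- Let A, R₀ ∈ ℝ and σ, c₀, γ > 0. Define J_r : (0,∞) → ℝ by J_r(r) = (2A/(√π·σ))·exp(−(r − R₀)²/σ²), and let ρ : (0,∞) → ℝ be a differentiable function satisfying the ODE ρ'(r) = −(ρ(r)·J_r(r)·c₀²/(γ² + J_r(r)²·c₀²))·(2J_r'(r) + J_r(r)/r) for all r > 0. For x ∈ ℝ² \ {0} set r = |x|, define the curl-free vector field J(x) = J_r(r)·x/r, the density ϱ(x) = ρ(r), and the pressure p(x) = γ²·ρ(r). Then the momentum flux tensor is divergence-free away from the origin: for k = 1,2 and every x ≠ 0, Σ_{i=1,2} ∂_i ( δ_ik·p(x) + ϱ(x)·c₀²·J_i(x)·J_k(x) ) = 0. Consequently (ρ, v = 0, J) is a stationary solution of the toy system ∂_t ρ + ∇·(ρv) = 0, ∂_t(ρv_k) + ∂_i(ρ v_i v_k + δ_ik p + ρ c₀² J_i J_k) = 0, ∂_t J_k + ∂_k(v_m J_m) + v_m(∂_m J_k − ∂_k J_m) = 0 with closure p = γ²ρ. -/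

import Mathlib

/-- The radial profile J_r(r) = (2A/(√π σ)) exp(−(r−R₀)²/σ²) (eqn. 6.8). -/
noncomputable def Jrad (A R0 σ r : ℝ) : ℝ :=
  2 * A / (Real.sqrt Real.pi * σ) * Real.exp (-((r - R0) ^ 2) / σ ^ 2)

/-- The radial coordinate r = |x| on ℝ². -/
noncomputable def radf (x : ℝ × ℝ) : ℝ :=
  Real.sqrt (x.1 ^ 2 + x.2 ^ 2)

/-- The radial (curl-free) vector field J(x) = J_r(|x|)·x/|x|. -/
noncomputable def Jf (A R0 σ : ℝ) (i : Fin 2) (x : ℝ × ℝ) : ℝ :=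
  Jrad A R0 σ (radf x) * (if i = 0 then x.1 else x.2) / radf x

/-- Partial derivative in the i-th coordinate direction of ℝ². -/
noncomputable def pd2 (i : Fin 2) (f : ℝ × ℝ → ℝ) (x : ℝ × ℝ) : ℝ :=
  if i = 0 then deriv (fun s => f (s, x.2)) x.1
  else deriv (fun s => f (x.1, s)) x.2

/-!
On `ℝ^n`, the tensor `δᵢₖ P(r) + S(r) xᵢ xₖ` has divergence `(P'/r + r S' + (n + 1) S) xₖ`. The
momentum flux of a radial field with profile `j` is of this shape with `P = γ² ρ` and
`S = ρ c² j² / r²`, so its divergence is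
`((γ² + c² j²) ρ' + ρ j c² (2 j' + (n - 1) j / r)) xₖ / r`, and the equilibrium equation for `ρ`
says exactly that the first factor vanishes.
-/

lemma hasFDerivAt_comp_norm {F : Type*} [NormedAddCommGroup F] [InnerProductSpace ℝ F]
    {f : ℝ → ℝ} {f' : ℝ} {x : F} (hx : x ≠ 0) (hf : HasDerivAt f f' ‖x‖) :
    HasFDerivAt (fun y : F ↦ f ‖y‖) ((f' / ‖x‖) • innerSL ℝ x) x := by
  have hnorm : HasFDerivAt (fun y : F ↦ ‖y‖) (‖x‖⁻¹ • innerSL ℝ x) x := by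
    have hsqrt := (hasStrictFDerivAt_norm_sq x).hasFDerivAt.sqrt (by simpa using hx)
    simp only [Real.sqrt_sq (norm_nonneg _)] at hsqrt
    refine hsqrt.congr_fderiv ?_
    rw [← Nat.cast_smul_eq_nsmul ℝ, smul_smul]
    congr 1
    field_simp
    norm_num
  exact (hf.comp_hasFDerivAt x hnorm).congr_fderiv (smul_smul _ _ _)

section ToySystem

variable {ι : Type*} [Fintype ι]

/-- The partial derivative `∂ᵢ f` at a point of `ℝ^ι`, with value `0` where the derivative does
not exist. -/
noncomputable def partialDeriv [DecidableEq ι] (i : ι) (f : EuclideanSpace ℝ ι → ℝ)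
    (x : EuclideanSpace ℝ ι) : ℝ :=
  lineDeriv ℝ f x (EuclideanSpace.single i 1)

/-- The radial vector field `J(x) = j(|x|) x / |x|` with profile `j`, by components. -/
noncomputable def radialField (j : ℝ → ℝ) (i : ι) (x : EuclideanSpace ℝ ι) : ℝ :=
  j ‖x‖ * x i / ‖x‖

/-- The momentum flux tensor `δᵢₖ p + ρ c² Jᵢ Jₖ` of the toy system at rest, with the closure
`p = γ² ρ` built in. -/
def momentumFlux [DecidableEq ι] (c γ : ℝ) (ρ : EuclideanSpace ℝ ι → ℝ)
    (J : ι → EuclideanSpace ℝ ι → ℝ) (i k : ι) (x : EuclideanSpace ℝ ι) : ℝ :=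
  (if i = k then 1 else 0) * (γ ^ 2 * ρ x) + ρ x * c ^ 2 * J i x * J k x

/-- The time-dependent fields `ρ`, `v`, `J` satisfy the equations of the toy system with closure
`p = γ² ρ`, in any space dimension, at time `t` and position `x`. -/
structure IsToySolutionAt [DecidableEq ι] (c γ : ℝ) (ρ : ℝ → EuclideanSpace ℝ ι → ℝ)
    (v J : ℝ → ι → EuclideanSpace ℝ ι → ℝ) (t : ℝ) (x : EuclideanSpace ℝ ι) : Prop where
  mass : deriv (fun s ↦ ρ s x) t + ∑ i, partialDeriv i (fun y ↦ ρ t y * v t i y) x = 0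
  momentum (k : ι) : deriv (fun s ↦ ρ s x * v s k x) t +
    ∑ i, partialDeriv i (fun y ↦ ρ t y * v t i y * v t k y +
      momentumFlux c γ (ρ t) (J t) i k y) x = 0
  field (k : ι) : deriv (fun s ↦ J s k x) t +
    partialDeriv k (fun y ↦ ∑ m, v t m y * J t m y) x +
    ∑ m, v t m x * (partialDeriv m (J t k) x - partialDeriv k (J t m) x) = 0

variable [DecidableEq ι]

lemma IsToySolutionAt.of_static {c γ : ℝ} {ρ : EuclideanSpace ℝ ι → ℝ}
    {J : ι → EuclideanSpace ℝ ι → ℝ} {x : EuclideanSpace ℝ ι}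
    (h : ∀ k, ∑ i, partialDeriv i (momentumFlux c γ ρ J i k) x = 0) (t : ℝ) :
    IsToySolutionAt c γ (fun _ ↦ ρ) (fun _ _ _ ↦ 0) (fun _ ↦ J) t x where
  mass := by simp [partialDeriv, lineDeriv]
  momentum k := by simpa using h k
  field k := by simp [partialDeriv, lineDeriv]

variable {x : EuclideanSpace ℝ ι}

lemma partialDeriv_isotropic_tensor {P S : ℝ → ℝ} {P' S' : ℝ} (hx : x ≠ 0)
    (hP : HasDerivAt P P' ‖x‖) (hS : HasDerivAt S S' ‖x‖) (i k : ι) :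
    partialDeriv i (fun y ↦ (if i = k then 1 else 0) * P ‖y‖ + S ‖y‖ * (y i * y k)) x =
      (if i = k then P' / ‖x‖ * x i + S ‖x‖ * x i else 0) +
        S ‖x‖ * x k + S' / ‖x‖ * x k * x i ^ 2 := by
  have hcoord (l : ι) : HasFDerivAt (fun y : EuclideanSpace ℝ ι ↦ y l)
      (EuclideanSpace.proj l : EuclideanSpace ℝ ι →L[ℝ] ℝ) x :=
    (EuclideanSpace.proj l : EuclideanSpace ℝ ι →L[ℝ] ℝ).hasFDerivAt
  have htensor := ((hasFDerivAt_comp_norm hx hP).const_mul (if i = k then 1 else 0)).add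
    ((hasFDerivAt_comp_norm hx hS).mul ((hcoord i).mul (hcoord k)))
  refine (htensor.hasLineDerivAt (EuclideanSpace.single i 1)).lineDeriv.trans ?_
  simp only [add_apply, smul_apply, innerSL_apply_apply,
    EuclideanSpace.inner_single_right, conj_trivial, Pi.mul_apply, PiLp.proj_apply,
    PiLp.single_apply, smul_eq_mul, if_true]
  rcases eq_or_ne i k with rfl | hik
  · simp only [if_true]
    ring
  · simp only [hik, hik.symm, if_false]
    ring

lemma divergence_isotropic_tensor {P S : ℝ → ℝ} {P' S' : ℝ} (hx : x ≠ 0)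
    (hP : HasDerivAt P P' ‖x‖) (hS : HasDerivAt S S' ‖x‖) (k : ι) :
    ∑ i, partialDeriv i (fun y ↦ (if i = k then 1 else 0) * P ‖y‖ + S ‖y‖ * (y i * y k)) x =
      (P' / ‖x‖ + ‖x‖ * S' + (Fintype.card ι + 1) * S ‖x‖) * x k := by
  have hr : ‖x‖ ≠ 0 := norm_ne_zero_iff.mpr hx
  simp only [partialDeriv_isotropic_tensor hx hP hS, Finset.sum_add_distrib, Finset.sum_ite_eq',
    Finset.mem_univ, if_true, Finset.sum_const, Finset.card_univ, nsmul_eq_mul, ← Finset.mul_sum,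
    ← EuclideanSpace.real_norm_sq_eq]
  field_simp
  ring

lemma divergence_momentumFlux_radialField (c γ : ℝ) {ρ j : ℝ → ℝ} {ρ' j' : ℝ} (hx : x ≠ 0)
    (hρ : HasDerivAt ρ ρ' ‖x‖) (hj : HasDerivAt j j' ‖x‖) (k : ι) :
    ∑ i, partialDeriv i (momentumFlux c γ (fun y ↦ ρ ‖y‖) (radialField j) i k) x =
      ((γ ^ 2 + j ‖x‖ ^ 2 * c ^ 2) * ρ' +
        ρ ‖x‖ * j ‖x‖ * c ^ 2 * (2 * j' + (Fintype.card ι - 1) * j ‖x‖ / ‖x‖)) *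
        (x k / ‖x‖) := by
  have hr : ‖x‖ ≠ 0 := norm_ne_zero_iff.mpr hx
  have hS : HasDerivAt (fun r ↦ ρ r * c ^ 2 * (j r / r) ^ 2)
      (ρ' * c ^ 2 * (j ‖x‖ / ‖x‖) ^ 2 +
        ρ ‖x‖ * c ^ 2 * (2 * (j ‖x‖ / ‖x‖) * ((j' * ‖x‖ - j ‖x‖) / ‖x‖ ^ 2))) ‖x‖ := by
    simpa using (hρ.mul_const (c ^ 2)).fun_mul ((hj.fun_div (hasDerivAt_id' ‖x‖) hr).fun_pow 2)
  have hflux (i : ι) : momentumFlux c γ (fun y ↦ ρ ‖y‖) (radialField j) i k = fun y ↦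
      (if i = k then 1 else 0) * (γ ^ 2 * ρ ‖y‖) +
        ρ ‖y‖ * c ^ 2 * (j ‖y‖ / ‖y‖) ^ 2 * (y i * y k) := by
    funext y
    simp only [momentumFlux, radialField]
    ring
  simp only [hflux]
  refine (divergence_isotropic_tensor hx (hρ.const_mul (γ ^ 2)) hS k).trans ?_
  field_simp
  ring

theorem stmt_17_general (c : ℝ) {γ : ℝ} (hγ : γ ≠ 0) {ρ j j' : ℝ → ℝ}
    (hj : ∀ r, 0 < r → HasDerivAt j (j' r) r)
    (hρ : ∀ r, 0 < r → HasDerivAt ρ (-(ρ r * j r * c ^ 2 / (γ ^ 2 + j r ^ 2 * c ^ 2)) *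
      (2 * j' r + (Fintype.card ι - 1) * j r / r)) r) (hx : x ≠ 0) :
    (∀ k, ∑ i, partialDeriv i (momentumFlux c γ (fun y ↦ ρ ‖y‖) (radialField j) i k) x = 0) ∧
      ∀ t, IsToySolutionAt c γ (fun _ y ↦ ρ ‖y‖) (fun _ _ _ ↦ 0) (fun _ ↦ radialField j) t x := by
  have hr : 0 < ‖x‖ := norm_pos_iff.mpr hx
  have hdiv (k : ι) :
      ∑ i, partialDeriv i (momentumFlux c γ (fun y ↦ ρ ‖y‖) (radialField j) i k) x = 0 := by
    have hden : γ ^ 2 + j ‖x‖ ^ 2 * c ^ 2 ≠ 0 := by positivity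
    rw [divergence_momentumFlux_radialField c γ hx (hρ _ hr) (hj _ hr)]
    field_simp
    ring
  exact ⟨hdiv, .of_static hdiv⟩

end ToySystem

section Plane

/-- The identification of `ℝ × ℝ`, which carries the sup norm, with the Euclidean plane. -/
def toPlane (x : ℝ × ℝ) : EuclideanSpace ℝ (Fin 2) := !₂[x.1, x.2]

lemma toPlane_coords (y : EuclideanSpace ℝ (Fin 2)) : toPlane (y 0, y 1) = y := by
  ext i
  fin_cases i <;> rfl

lemma toPlane_ne_zero {x : ℝ × ℝ} (hx : x ≠ 0) : toPlane x ≠ 0 := fun h ↦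
  hx (Prod.ext (congrArg (· 0) h) (congrArg (· 1) h))

lemma radf_eq_norm (x : ℝ × ℝ) : radf x = ‖toPlane x‖ := by
  simp [radf, toPlane, EuclideanSpace.norm_eq]

lemma Jf_eq_radialField (A R0 σ : ℝ) (i : Fin 2) (x : ℝ × ℝ) :
    Jf A R0 σ i x = radialField (Jrad A R0 σ) i (toPlane x) := by
  rw [Jf, radf_eq_norm, radialField]
  fin_cases i <;> rfl

lemma pd2_eq_partialDeriv (i : Fin 2) (f : ℝ × ℝ → ℝ) (x : ℝ × ℝ) :
    pd2 i f x = partialDeriv i (fun y ↦ f (y 0, y 1)) (toPlane x) := by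
  fin_cases i
  · simpa [pd2, partialDeriv, lineDeriv, toPlane] using
      (deriv_comp_const_add (fun s ↦ f (s, x.2)) x.1 0).symm
  · simpa [pd2, partialDeriv, lineDeriv, toPlane] using
      (deriv_comp_const_add (fun s ↦ f (x.1, s)) x.2 0).symm

end Plane

lemma differentiable_Jrad (A R0 σ : ℝ) : Differentiable ℝ (Jrad A R0 σ) := by
  unfold Jrad
  fun_prop

/-- with J_r as above and ρ solving the equilibrium ODE (6.10),
the momentum flux tensor δ_ik p + ϱ c₀² J_i J_k is divergence-free away from
the origin; consequently (ρ, v = 0, J) is a stationary solution of the toy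
system with closure p = γ²ρ. -/
theorem stmt_17 (A R0 σ c0 γ : ℝ) (hσ : 0 < σ) (hc0 : 0 < c0) (hγ : 0 < γ)
    (ρ : ℝ → ℝ)
    (hρ : ∀ r : ℝ, 0 < r →
      HasDerivAt ρ
        (-(ρ r * Jrad A R0 σ r * c0 ^ 2 / (γ ^ 2 + (Jrad A R0 σ r) ^ 2 * c0 ^ 2)) *
          (2 * deriv (Jrad A R0 σ) r + Jrad A R0 σ r / r)) r) :
    (∀ k : Fin 2, ∀ x : ℝ × ℝ, x ≠ 0 →
      (∑ i : Fin 2,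
        pd2 i (fun x' : ℝ × ℝ =>
          (if i = k then (1 : ℝ) else 0) * (γ ^ 2 * ρ (radf x')) +
            ρ (radf x') * c0 ^ 2 * Jf A R0 σ i x' * Jf A R0 σ k x') x) = 0) ∧
    (∀ velo : Fin 2 → ℝ × ℝ → ℝ, (∀ m : Fin 2, ∀ x : ℝ × ℝ, velo m x = 0) →
      ∀ t : ℝ, ∀ x : ℝ × ℝ, x ≠ 0 →
        (deriv (fun _ : ℝ => ρ (radf x)) t +
          ∑ i : Fin 2, pd2 i (fun x' => ρ (radf x') * velo i x') x = 0) ∧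
        (∀ k : Fin 2,
          deriv (fun _ : ℝ => ρ (radf x) * velo k x) t +
            ∑ i : Fin 2,
              pd2 i (fun x' =>
                ρ (radf x') * velo i x' * velo k x' +
                  (if i = k then (1 : ℝ) else 0) * (γ ^ 2 * ρ (radf x')) +
                  ρ (radf x') * c0 ^ 2 * Jf A R0 σ i x' * Jf A R0 σ k x') x = 0) ∧
        (∀ k : Fin 2,
          deriv (fun _ : ℝ => Jf A R0 σ k x) t +
            pd2 k (fun x' => ∑ m : Fin 2, velo m x' * Jf A R0 σ m x') x +
            ∑ m : Fin 2,
              velo m x * (pd2 m (Jf A R0 σ k) x - pd2 k (Jf A R0 σ m) x) = 0)) := by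
  have hgen {x : ℝ × ℝ} (hx : x ≠ 0) := stmt_17_general c0 hγ.ne'
    (fun r _ ↦ (differentiable_Jrad A R0 σ r).hasDerivAt)
    (fun r hr ↦ (hρ r hr).congr_deriv (by norm_num)) (toPlane_ne_zero hx)
  simp only [pd2_eq_partialDeriv, radf_eq_norm, Jf_eq_radialField, toPlane_coords]
  refine ⟨fun k x hx ↦ (hgen hx).1 k, fun velo hv t x hx ↦ ?_⟩
  obtain rfl : velo = fun _ _ ↦ 0 := funext₂ hv
  have hsol := (hgen hx).2 t
  exact ⟨hsol.mass, fun k ↦ by simpa only [momentumFlux, add_assoc] using hsol.momentum k,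
    hsol.field⟩
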